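/- arXiv:2110.08414 — 4 statements merged into one kernel-verified Lean document; each statement's English description precedes it below -/
import Mathlib

section
/- Let C₁ ⊆ C be ZMod p-linear subspaces of (Fin n → ZMod p), and let C^⊥ = {v | ∀ c ∈ C, ⟨v,c⟩ = 0}. Then the generators of the reflexive stabilizer S_C^{C₁} pairwise commute: for all x, x' ∈ C^⊥ and all y, y' ∈ C₁, the matrices D(x,x) and D(x',x') commute, D(y,0) and D(y',0) commute, and D(x,x) and D(y,0) commute. -/
/-!
`D(a,b) D(a',b')` is supported on the entries `(z + a' + a, z)`, with value
`ω ^ (⟨b, z + a'⟩ + ⟨b', z⟩)` there, the exponent being well defined modulo `p` because `ω ^ p = 1`.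
Exchanging the factors replaces `⟨b, a'⟩` by `⟨b', a⟩` in the exponent, so the two operators commute
as soon as `⟨b, a'⟩ = ⟨b', a⟩` (`errD_commute`). For the generators this condition is the symmetry
`⟨x, x'⟩ = ⟨x', x⟩`, the trivial `0 = 0`, and `⟨x, y⟩ = 0`, which holds for `x ∈ C^⊥` and
`y ∈ C₁ ⊆ C`.
-/

/-- The primitive `p`-th root of unity `ω = exp(2πi/p)`. -/
noncomputable def omg (p : ℕ) : ℂ := Complex.exp (2 * Real.pi * Complex.I / p)

/-- The inner product `⟨u,v⟩ = ∑ i, u i * v i` on `(Fin n → ZMod p)`. -/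
def ip {p n : ℕ} (u v : Fin n → ZMod p) : ZMod p := ∑ i, u i * v i

/-- The error operator `D(a,b)`, the matrix of
`X(a₁)Z(b₁) ⊗ ⋯ ⊗ X(aₙ)Z(bₙ)`, acting as `D(a,b)|y⟩ = ω^⟨b,y⟩ |y + a⟩`. -/
noncomputable def errD {p n : ℕ} (a b : Fin n → ZMod p) :
    Matrix (Fin n → ZMod p) (Fin n → ZMod p) ℂ :=
  fun x y => if x = y + a then omg p ^ (ip b y).val else 0

theorem omg_pow_self (p : ℕ) [Fact p.Prime] : omg p ^ p = 1 :=
  (Complex.isPrimitiveRoot_exp p (Fact.out : p.Prime).ne_zero).pow_eq_one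

theorem omg_pow_val_mul (p : ℕ) [Fact p.Prime] (s t : ZMod p) :
    omg p ^ s.val * omg p ^ t.val = omg p ^ (s + t).val := by
  rw [← pow_add, ZMod.val_add, ← pow_eq_pow_mod _ (omg_pow_self p)]

theorem ip_add_right {p n : ℕ} (u v w : Fin n → ZMod p) : ip u (v + w) = ip u v + ip u w :=
  dotProduct_add u v w

theorem ip_comm {p n : ℕ} (u v : Fin n → ZMod p) : ip u v = ip v u :=
  dotProduct_comm u v

theorem ip_zero_left {p n : ℕ} (v : Fin n → ZMod p) : ip 0 v = 0 :=
  zero_dotProduct v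

theorem errD_mul_apply {p n : ℕ} [Fact p.Prime] (a b a' b' x z : Fin n → ZMod p) :
    (errD a b * errD a' b') x z =
      if x = z + a' + a then omg p ^ (ip b (z + a') + ip b' z).val else 0 := by
  simp [Matrix.mul_apply, errD, ← omg_pow_val_mul]

theorem errD_commute {p n : ℕ} [Fact p.Prime] {a b a' b' : Fin n → ZMod p}
    (h : ip b a' = ip b' a) : Commute (errD a b) (errD a' b') := by
  ext x z
  rw [errD_mul_apply, errD_mul_apply, add_right_comm z a' a, ip_add_right, ip_add_right, h,
    show ip b z + ip b' a + ip b' z = ip b' z + ip b' a + ip b z by ring]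

/-- The generators of the reflexive stabilizer `S_C^{C₁}` pairwise commute:
`D(x,x)` for `x ∈ C^⊥` and `D(y,0)` for `y ∈ C₁` all commute with one another. -/
theorem reflexive_stabilizer_generators_commute (p : ℕ) [Fact p.Prime] (n : ℕ)
    (hn : 1 ≤ n) (C C₁ : Submodule (ZMod p) (Fin n → ZMod p)) (hsub : C₁ ≤ C) :
    (∀ x ∈ {v : Fin n → ZMod p | ∀ c ∈ C, ip v c = 0},
      ∀ x' ∈ {v : Fin n → ZMod p | ∀ c ∈ C, ip v c = 0},
        Commute (errD x x) (errD x' x')) ∧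
    (∀ y ∈ C₁, ∀ y' ∈ C₁, Commute (errD y (0 : Fin n → ZMod p)) (errD y' 0)) ∧
    (∀ x ∈ {v : Fin n → ZMod p | ∀ c ∈ C, ip v c = 0},
      ∀ y ∈ C₁, Commute (errD x x) (errD y (0 : Fin n → ZMod p))) := by
  refine ⟨fun x _ x' _ => errD_commute (ip_comm x x'),
    fun y _ y' _ => errD_commute (by rw [ip_zero_left, ip_zero_left]),
    fun x hx y hy => errD_commute ?_⟩
  rw [ip_zero_left]
  exact hx y (hsub hy)
end

section
/- Let p be an odd prime, ω = Complex.exp(2 * Real.pi * Complex.I / p), and for each κ ∈ {0, …, p−1} let ψ_κ : ZMod p → ℂ be given by ψ_κ(i) = p^(−1/2) · ω^(ĩ(ĩ−1)/2 − ĩκ), with ĩ the canonical representative of i. Then the family (ψ_κ) is orthonormal: for all κ, κ' ∈ {0, …, p−1}, ∑_{i ∈ ZMod p} conj(ψ_κ(i)) · ψ_{κ'}(i) equals 1 if κ = κ' and 0 otherwise. Consequently (ψ_κ) is an orthonormal basis of ℂ^p and each eigenvalue ω^κ of X(1)Z(1) has a one-dimensional eigenspace. -/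
/-- The eigenstate `ψ_κ(i) = p^(-1/2) · ω^(ĩ(ĩ-1)/2 - ĩκ)` of `X(1)Z(1)`. -/
noncomputable def psiVec (p : ℕ) (κ : ℕ) : ZMod p → ℂ :=
  fun i => (1 / Real.sqrt p) *
    omg p ^ ((i.val : ℤ) * ((i.val : ℤ) - 1) / 2 - (i.val : ℤ) * (κ : ℤ))

theorem omg_isPrimitiveRoot (p : ℕ) (hp : p ≠ 0) : IsPrimitiveRoot (omg p) p :=
  Complex.isPrimitiveRoot_exp p hp

theorem conj_omg (p : ℕ) (hp : p ≠ 0) : (starRingEnd ℂ) (omg p) = (omg p)⁻¹ :=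
  (Complex.inv_eq_conj ((omg_isPrimitiveRoot p hp).norm'_eq_one hp)).symm

theorem conj_psiVec_mul_psiVec (p : ℕ) (hp : p ≠ 0) (κ κ' : ℕ) (i : ZMod p) :
    (starRingEnd ℂ) (psiVec p κ i) * psiVec p κ' i =
      (p : ℂ)⁻¹ * (omg p ^ ((κ : ℤ) - κ')) ^ i.val := by
  have h0 : omg p ≠ 0 := (omg_isPrimitiveRoot p hp).ne_zero hp
  have hs : ((Real.sqrt p : ℝ) : ℂ) * (Real.sqrt p : ℝ) = p := by
    rw [← Complex.ofReal_mul, Real.mul_self_sqrt (Nat.cast_nonneg p), Complex.ofReal_natCast]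
  simp only [psiVec, map_mul, map_div₀, map_one, Complex.conj_ofReal, map_zpow₀, conj_omg p hp,
    inv_zpow']
  rw [mul_mul_mul_comm, ← zpow_add₀ h0, ← zpow_natCast, ← zpow_mul, div_mul_div_comm, hs, one_mul,
    one_div]
  congr 2
  ring

/-- Summation over canonical representatives: the values `i.val` run through `0, …, p - 1`. -/
theorem sum_zmod_pow_val (p : ℕ) [NeZero p] (z : ℂ) :
    ∑ i : ZMod p, z ^ i.val = ∑ k ∈ Finset.range p, z ^ k := by
  refine Finset.sum_bij (fun i _ => i.val) (fun i _ => Finset.mem_range.2 i.val_lt)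
    (fun i _ j _ h => ZMod.val_injective p h) (fun k hk => ?_) (fun _ _ => rfl)
  exact ⟨k, Finset.mem_univ _, ZMod.val_cast_of_lt (Finset.mem_range.1 hk)⟩

/-- For an odd prime `p`, the family `(ψ_κ)_{0 ≤ κ ≤ p-1}` is orthonormal:
`∑ i, conj (ψ_κ i) * ψ_κ' i = 1` if `κ = κ'` and `0` otherwise.  Hence it is an
orthonormal basis of `ℂ^p` and each eigenvalue `ω^κ` of `X(1)Z(1)` has a
one-dimensional eigenspace. -/
theorem psiVec_orthonormal (p : ℕ) [Fact p.Prime] (hodd : p ≠ 2)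
    (κ κ' : ℕ) (hκ : κ < p) (hκ' : κ' < p) :
    ∑ i : ZMod p, (starRingEnd ℂ) (psiVec p κ i) * psiVec p κ' i =
      if κ = κ' then 1 else 0 := by
  have hp : p ≠ 0 := (Fact.out : p.Prime).ne_zero
  have hprim := omg_isPrimitiveRoot p hp
  simp only [conj_psiVec_mul_psiVec p hp]
  rw [← Finset.mul_sum, sum_zmod_pow_val]
  split_ifs with h
  · subst h
    simp [hp]
  · have hz : omg p ^ ((κ : ℤ) - κ') ≠ 1 := by
      rw [Ne, hprim.zpow_eq_one_iff_dvd]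
      intro hdvd
      have := Int.eq_zero_of_abs_lt_dvd hdvd (by rw [abs_lt]; omega)
      omega
    have hzp : (omg p ^ ((κ : ℤ) - κ')) ^ p = 1 := by
      rw [← zpow_natCast, zpow_comm, zpow_natCast, hprim.pow_eq_one, one_zpow]
    rw [geom_sum_eq hz, hzp, sub_self, zero_div, mul_zero]
end

section
/- Let p be a prime, ω = Complex.exp(2 * Real.pi * Complex.I / p), and let M be the complex p × p matrix indexed by ZMod p with M(x,y) = ω^(y.val) if x = y + 1 and 0 otherwise (so M = X(1)Z(1)). For every natural number a, M^a = ω^(a(a−1)/2) • D(ā,ā), where ā = (a : ZMod p) and D(ā,ā) is the matrix with entries D(ā,ā)(x,y) = ω^((ā * y).val) if x = y + ā and 0 otherwise (i.e., D(ā,ā) = X(ā)Z(ā)). In particular every X(a)Z(a) is a root-of-unity multiple of a power of X(1)Z(1), and hence has the same eigenvectors as X(1)Z(1). -/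
/-- The matrix `M = X(1)Z(1)` on `ℂ^p`: `M(x,y) = ω^(y.val)` if `x = y + 1`, else `0`. -/
noncomputable def XZ (p : ℕ) : Matrix (ZMod p) (ZMod p) ℂ :=
  fun x y => if x = y + 1 then omg p ^ y.val else 0

/-- The single-qudit error operator `D(a,b) = X(a)Z(b)`:
`D(a,b)(x,y) = ω^((b*y).val)` if `x = y + a`, else `0`. -/
noncomputable def errD1 (p : ℕ) (a b : ZMod p) : Matrix (ZMod p) (ZMod p) ℂ :=
  fun x y => if x = y + a then omg p ^ (b * y).val else 0

/-- Powers of `ω` depend only on the residue class of the exponent modulo `p`. -/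
lemma omg_pow_congr (p : ℕ) [Fact p.Prime] {m n : ℕ} (h : (m : ZMod p) = n) :
    omg p ^ m = omg p ^ n := by
  have hp : omg p ^ p = 1 :=
    (Complex.isPrimitiveRoot_exp p (Fact.out : p.Prime).ne_zero).pow_eq_one
  have h' : m % p = n % p := (ZMod.natCast_eq_natCast_iff m n p).1 h
  rw [pow_eq_pow_mod m hp, pow_eq_pow_mod n hp, h']

lemma XZ_mul_errD1 (p : ℕ) [Fact p.Prime] (a : ℕ) :
    XZ p * errD1 p (a : ZMod p) (a : ZMod p) =
      omg p ^ a • errD1 p ((a + 1 : ℕ) : ZMod p) ((a + 1 : ℕ) : ZMod p) := by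
  ext x y
  rw [Matrix.mul_apply, Matrix.smul_apply, smul_eq_mul]
  simp only [XZ, errD1]
  -- The second factor forces `k = y + a` in the sum over `k`.
  rw [Finset.sum_eq_single (y + (a : ZMod p)) (fun k _ hk => by simp [hk]) (by simp)]
  by_cases hx : x = y + (a : ZMod p) + 1
  · have hx' : x = y + ((a + 1 : ℕ) : ZMod p) := by rw [hx]; push_cast; ring
    rw [if_pos hx, if_pos rfl, if_pos hx', ← pow_add, ← pow_add]
    apply omg_pow_congr
    simp only [Nat.cast_add, ZMod.natCast_zmod_val, Nat.cast_one]
    ring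
  · have hx' : ¬ x = y + ((a + 1 : ℕ) : ZMod p) := by
      push_cast
      rwa [← add_assoc]
    rw [if_neg hx, if_neg hx', zero_mul, mul_zero]

/-- For every natural number `a`, `(X(1)Z(1))^a = ω^(a(a-1)/2) • X(ā)Z(ā)`; in
particular every `X(a)Z(a)` is a root-of-unity multiple of a power of `X(1)Z(1)`
and hence has the same eigenvectors. -/
theorem XZ_pow (p : ℕ) [Fact p.Prime] (a : ℕ) :
    XZ p ^ a = omg p ^ (a * (a - 1) / 2) • errD1 p (a : ZMod p) (a : ZMod p) := by
  rw [← Nat.choose_two_right]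
  induction a with
  | zero =>
    ext x y
    simp [errD1, Matrix.one_apply]
  | succ a ih =>
    rw [pow_succ', ih, Matrix.mul_smul, XZ_mul_errD1, smul_smul, ← pow_add,
      Nat.choose_succ_succ' a 1, Nat.choose_one_right, add_comm a (a.choose 2)]
end

section
/- Let F be a field with exactly 4 elements and let ξ ∈ F satisfy ξ² = ξ + 1 (equivalently ξ² + ξ + 1 = 0, since F has characteristic 2). Let C ⊆ F⁴ be the F-linear span of the two vectors (1, ξ, 1, 0) and (ξ², ξ², 0, 1). Then: (i) every nonzero c ∈ C has Hamming weight at least 3; and (ii) every nonzero v ∈ F⁴ with ξ·v 0 + v 1 + v 2 + v 3 = 0 has Hamming weight at least 2. Hence the two-dimensional code C together with the one-dimensional subcode C₁ spanned by (ξ, 1, 1, 1) ∈ C satisfies wt(C) ≥ 3 and wt(C₁^⊥) ≥ 2. -/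
/-!
A field with four elements has characteristic `2`, so `ξ ^ 2 = ξ + 1` forces `ξ ≠ 0` and `ξ ≠ 1`.
A codeword of `C` is `(a + b ξ², a ξ + b ξ², a, b)`, and every `2 × 2` minor of the generator matrix
is nonzero, so two vanishing coordinates force `a = b = 0`: nonzero codewords have weight at
least `3`. All coordinates of `(ξ, 1, 1, 1)` are nonzero, so no vector of weight one is
orthogonal to it. Finally `(ξ, 1, 1, 1)` is the sum of the two generators.
-/

/-- The Hamming weight on `F⁴` as an explicit sum of indicators. -/
lemma hammingNorm_fin_four {F : Type*} [Zero F] [DecidableEq F] (v : Fin 4 → F) :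
    hammingNorm v = (if v 0 = 0 then 0 else 1) + (if v 1 = 0 then 0 else 1)
      + (if v 2 = 0 then 0 else 1) + (if v 3 = 0 then 0 else 1) := by
  simp [hammingNorm, Finset.card_filter, Fin.sum_univ_four]

/-- The perfect code on a 4-state system: for a field `F` with 4 elements and
`ξ` with `ξ² = ξ + 1`, the span `C` of `(1,ξ,1,0)` and `(ξ²,ξ²,0,1)` in `F⁴`
satisfies `wt(C) ≥ 3`; every nonzero `v` orthogonal to `(ξ,1,1,1)` has weight `≥ 2`
(i.e. `wt(C₁^⊥) ≥ 2` for the subcode `C₁` spanned by `(ξ,1,1,1)`); and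
`(ξ,1,1,1) ∈ C`. -/
theorem perfect_code_four_state (F : Type*) [Field F] [Fintype F] [DecidableEq F]
    (h4 : Fintype.card F = 4) (ξ : F) (hξ : ξ ^ 2 = ξ + 1) :
    (∀ c ∈ Submodule.span F ({![1, ξ, 1, 0], ![ξ ^ 2, ξ ^ 2, 0, 1]} : Set (Fin 4 → F)),
        c ≠ 0 → 3 ≤ hammingNorm c) ∧
    (∀ v : Fin 4 → F, v ≠ 0 → ξ * v 0 + v 1 + v 2 + v 3 = 0 → 2 ≤ hammingNorm v) ∧
    ![ξ, 1, 1, 1] ∈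
      Submodule.span F ({![1, ξ, 1, 0], ![ξ ^ 2, ξ ^ 2, 0, 1]} : Set (Fin 4 → F)) := by
  have h2 : (2 : F) = 0 := by
    have h : ((Fintype.card F : ℕ) : F) = 0 := Nat.cast_card_eq_zero F
    rw [h4] at h
    have h' : (2 : F) * 2 = 0 := by
      push_cast at h
      linear_combination h
    exact mul_self_eq_zero.mp h'
  have hξ0 : ξ ≠ 0 := by
    rintro rfl
    simp at hξ
  have hξ1 : ξ - 1 ≠ 0 := by
    intro h
    -- at `ξ = 1` the equation reads `1 = 2 = 0`
    have h1 : (1 : F) = 0 := by linear_combination h2 + hξ - ξ * h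
    exact one_ne_zero h1
  refine ⟨fun c hc hne => ?_, fun v hne hv => ?_, ?_⟩
  · obtain ⟨a, b, rfl⟩ := Submodule.mem_span_pair.mp hc
    have hab : ¬ (a = 0 ∧ b = 0) := by
      rintro ⟨rfl, rfl⟩
      simp at hne
    -- the minor of the first two columns is `ξ ^ 2 * (1 - ξ)`
    have h01 : a + b * ξ ^ 2 = 0 → a * ξ + b * ξ ^ 2 = 0 → a = 0 := by
      intro h h'
      have : a * (ξ - 1) = 0 := by linear_combination h' - h
      exact (mul_eq_zero.mp this).resolve_right hξ1
    rw [hammingNorm_fin_four]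
    simp only [Pi.add_apply, Pi.smul_apply, smul_eq_mul, Matrix.cons_val, mul_one, mul_zero,
      add_zero, zero_add]
    by_cases ha : a = 0 <;> by_cases hb : b = 0
    · exact absurd ⟨ha, hb⟩ hab
    · simp [ha, hb, hξ0]
    · simp [ha, hb, hξ0]
    · by_cases h0 : a + b * ξ ^ 2 = 0 <;> by_cases h1 : a * ξ + b * ξ ^ 2 = 0
      · exact absurd (h01 h0 h1) ha
      all_goals simp [ha, hb, h0, h1]
  · have hz : ¬ (v 0 = 0 ∧ v 1 = 0 ∧ v 2 = 0 ∧ v 3 = 0) := by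
      rintro ⟨h0, h1, h2, h3⟩
      exact hne (by ext i; fin_cases i <;> assumption)
    rw [hammingNorm_fin_four]
    by_cases h0 : v 0 = 0 <;> by_cases h1 : v 1 = 0 <;> by_cases h2 : v 2 = 0 <;>
      by_cases h3 : v 3 = 0 <;> simp_all
  · refine Submodule.mem_span_pair.mpr ⟨1, 1, ?_⟩
    ext i
    fin_cases i
    · simp
      linear_combination hξ + h2
    · simp
      linear_combination hξ + ξ * h2
    · simp
    · simp
end
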